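/- The matching distance d_match between reduced size functions, defined by d_match(ℓ*₁, ℓ*₂) := inf_σ sup_i d(a_i, b_{σ(i)}), where (a_i) and (b_i) are representative sequences for ℓ*₁ and ℓ*₂ and σ ranges over all bijections ℕ → ℕ, is well-defined (independent of the choice of representative sequences), finite, and satisfies the axioms of a metric on reduced size functions. -/

import Mathlib

open Set Topology
open scoped ENNReal

noncomputable def rsf {M : Type*} [TopologicalSpace M] (φ : M → ℝ) (x y : ℝ) : ℕ :=
  Set.ncard {C : Set M | ∃ P, φ P ≤ x ∧ C = connectedComponentIn {Q | φ Q ≤ y} P}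

noncomputable def mult {M : Type*} [TopologicalSpace M] (φ : M → ℝ) (p : ℝ × ℝ) : ℤ :=
  sInf {z : ℤ | ∃ ε : ℝ, 0 < ε ∧ p.1 + ε < p.2 - ε ∧
    z = (rsf φ (p.1 + ε) (p.2 - ε) : ℤ) - (rsf φ (p.1 - ε) (p.2 - ε) : ℤ)
      - (rsf φ (p.1 + ε) (p.2 + ε) : ℤ) + (rsf φ (p.1 - ε) (p.2 + ε) : ℤ)}

noncomputable def multInf {M : Type*} [TopologicalSpace M] (φ : M → ℝ) (k : ℝ) : ℤ :=
  sInf {z : ℤ | ∃ ε : ℝ, 0 < ε ∧ k + ε < 1 / ε ∧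
    z = (rsf φ (k + ε) (1 / ε) : ℤ) - (rsf φ (k - ε) (1 / ε) : ℤ)}

open scoped Classical in
noncomputable def eDist (p q : ℝ × EReal) : ℝ≥0∞ :=
  if p.2 = ⊤ ∧ q.2 = ⊤ then ENNReal.ofReal |p.1 - q.1|
  else if p.2 = ⊤ ∨ q.2 = ⊤ then ⊤
  else ENNReal.ofReal (min (max |p.1 - q.1| |p.2.toReal - q.2.toReal|)
    (max ((p.2.toReal - p.1) / 2) ((q.2.toReal - q.1) / 2)))

def IsRepSeq {M : Type*} [TopologicalSpace M] (φ : M → ℝ) (a : ℕ → ℝ × EReal) : Prop :=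
  (∃ k : ℝ, a 0 = (k, ⊤) ∧ 0 < multInf φ k) ∧
  (∀ i : ℕ, 0 < i →
    (∃ x y : ℝ, a i = (x, (y : EReal)) ∧ x < y ∧ 0 < mult φ (x, y)) ∨
    (∃ x : ℝ, a i = (x, (x : EReal)))) ∧
  (∀ x y : ℝ, x < y → 0 < mult φ (x, y) →
    Set.ncard {i : ℕ | a i = (x, (y : EReal))} = (mult φ (x, y)).toNat) ∧
  {i : ℕ | ∃ x : ℝ, a i = (x, (x : EReal))}.Infinite

noncomputable def dMatchSeq (a b : ℕ → ℝ × EReal) : ℝ≥0∞ :=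
  ⨅ σ : {σ : ℕ → ℕ // Function.Bijective σ}, ⨆ i : ℕ, eDist (a i) (b (σ.1 i))

noncomputable def dMatch {M N : Type*} [TopologicalSpace M] [TopologicalSpace N]
    (φ : M → ℝ) (ψ : N → ℝ) : ℝ≥0∞ :=
  sInf {s : ℝ≥0∞ | ∃ a b, IsRepSeq φ a ∧ IsRepSeq ψ b ∧ s = dMatchSeq a b}

/-
For fixed `y` the function `rsf φ · y` is nondecreasing, for fixed `x` the function `rsf φ x ·` is
nonincreasing, and the box inequality `rsf x' y' + rsf x y ≤ rsf x' y + rsf x y'` makes the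
multiplicity of a point the value of the alternating sum over all small squares around it. A
cornerpoint is therefore a jump in each variable, so that cornerpoints above the diagonal are
isolated. Hence the points of two representative sequences of one function agree up to a
permutation that only moves diagonal points, at cost zero, and the triangle inequality for `eDist`
gives everything but definiteness.

If the matching distance vanishes, isolation forces the multiplicities to agree. Put
`h = rsf φ - rsf ψ`. Normality makes decreasing intersections of continua connected, so `h` is
right-continuous in each variable. For `u < x` close to `x` the jump of `v ↦ h x v - h u v` on the
left of `v` is the difference of the two multiplicities at `(x, v)`, so this function is constant,
and it is zero for large `v`. Thus `h · y` is locally constant, and it is zero below the minima.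
-/

open Filter

section General

variable {α β : Type*}

lemma ncard_image_add_ncard_le {f : α → β} {s t : Set α} (hs : s.Finite) (hts : t ⊆ s) :
    (f '' s).ncard + t.ncard ≤ s.ncard + (f '' t).ncard := by
  have hsub : f '' s ⊆ f '' (s \ t) ∪ f '' t := by
    rw [← image_union, sdiff_union_of_subset hts]
  have hunion : (f '' s).ncard ≤ (s \ t).ncard + (f '' t).ncard :=
    (ncard_le_ncard hsub ((hs.sdiff.image f).union ((hs.subset hts).image f))).trans
      ((ncard_union_le _ _).trans (Nat.add_le_add_right (ncard_image_le hs.sdiff) _))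
  have hsdiff := ncard_sdiff_add_ncard_of_subset hts hs
  omega

lemma nonempty_equiv_of_encard_eq [Countable α] {s t : Set α} (h : s.encard = t.encard) :
    Nonempty (s ≃ t) :=
  Cardinal.eq.1 <| Cardinal.toENat_injOn Cardinal.mk_le_aleph0 Cardinal.mk_le_aleph0 h

lemma exists_equiv_of_encard_fiber_eq {ι : Type*} [Countable ι] {f g : ι → α}
    (h : ∀ c, {i | f i = c}.encard = {i | g i = c}.encard) :
    ∃ σ : ι ≃ ι, ∀ i, g (σ i) = f i :=
  ⟨Equiv.ofFiberEquiv fun c => (nonempty_equiv_of_encard_eq (h c)).some,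
    Equiv.ofFiberEquiv_map _⟩

lemma exists_equiv_eq_or_mem_of_encard_fiber_eq {ι : Type*} [Countable ι] {f g : ι → α}
    {D : Set α} (hD : {i | f i ∈ D}.encard = {i | g i ∈ D}.encard)
    (h : ∀ c ∉ D, {i | f i = c}.encard = {i | g i = c}.encard) :
    ∃ σ : ι ≃ ι, ∀ i, g (σ i) = f i ∨ f i ∈ D ∧ g (σ i) ∈ D := by
  classical
  let collapse (x : α) : Option α := if x ∈ D then none else some x
  have collapse_eq_none (x : α) : collapse x = none ↔ x ∈ D := by simp [collapse]
  have collapse_eq_some (x c : α) : collapse x = some c ↔ c ∉ D ∧ x = c := by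
    simp only [collapse]
    split_ifs <;> grind
  obtain ⟨σ, hσ⟩ : ∃ σ : ι ≃ ι, ∀ i, collapse (g (σ i)) = collapse (f i) := by
    refine exists_equiv_of_encard_fiber_eq (f := collapse ∘ f) (g := collapse ∘ g) ?_
    rintro (_ | c)
    · simpa only [Function.comp_apply, collapse_eq_none] using hD
    · by_cases hc : c ∈ D
      · simp [collapse_eq_some, hc]
      · simpa only [Function.comp_apply, collapse_eq_some, hc, not_false_eq_true, true_and]
          using h c hc
  refine ⟨σ, fun i => ?_⟩
  by_cases hi : f i ∈ D
  · exact Or.inr ⟨hi, (collapse_eq_none _).1 ((hσ i).trans ((collapse_eq_none _).2 hi))⟩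
  · exact Or.inl ((collapse_eq_some _ _).1 ((hσ i).trans ((collapse_eq_some _ _).2 ⟨hi, rfl⟩))).2

lemma exists_seq_ncard_fiber_eq {S : Set α} (hS : S.Countable) (n : α → ℕ) {d : α} (hd : d ∉ S) :
    ∃ s : ℕ → α, (∀ i, s i ∈ S ∨ s i = d) ∧ (∀ p ∈ S, {i | s i = p}.ncard = n p) ∧
      {i | s i = d}.Infinite := by
  have : Countable S := hS.to_subtype
  let val : (Σ p : S, Fin (n p)) ⊕ ℕ → α := Sum.elim (fun q => q.1) (fun _ => d)
  obtain ⟨e⟩ : Nonempty (ℕ ≃ (Σ p : S, Fin (n p)) ⊕ ℕ) := nonempty_equiv_of_countable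
  refine ⟨val ∘ e, fun i => ?_, fun p hp => ?_, ?_⟩
  · rcases h : e i with q | k
    · exact Or.inl (by simp [val, h])
    · exact Or.inr (by simp [val, h])
  · have hfiber : val ⁻¹' {p} = range fun j : Fin (n p) => Sum.inl ⟨⟨p, hp⟩, j⟩ := by
      ext (⟨⟨q, hq⟩, j⟩ | k)
      · simp only [val, mem_preimage, Sum.elim_inl, mem_singleton_iff, mem_range]
        refine ⟨?_, fun ⟨_, hk⟩ => by cases hk; rfl⟩
        rintro rfl
        exact ⟨j, rfl⟩
      · simpa [val] using fun h : d = p => hd (h ▸ hp)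
    have hinj : Function.Injective fun j : Fin (n p) =>
        (Sum.inl ⟨⟨p, hp⟩, j⟩ : (Σ p : S, Fin (n p)) ⊕ ℕ) :=
      Sum.inl_injective.comp sigma_mk_injective
    change (e ⁻¹' (val ⁻¹' {p})).ncard = n p
    rw [ncard_def, encard_preimage_of_bijective e.bijective, ← ncard_def, hfiber, ← image_univ,
      ncard_image_of_injective _ hinj, ncard_univ, Nat.card_fin]
  · refine (infinite_range_of_injective
      (e.symm.injective.comp Sum.inr_injective)).mono ?_
    rintro _ ⟨k, rfl⟩
    simp [val]

end General

section Topology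

variable {X : Type*} [TopologicalSpace X]

lemma isClosed_connectedComponentIn {F : Set X} (hF : IsClosed F) (p : X) :
    IsClosed (connectedComponentIn F p) := by
  by_cases h : p ∈ F
  · rw [connectedComponentIn_eq_image h]
    exact hF.isClosedEmbedding_subtypeVal.isClosedMap _ isClosed_connectedComponent
  · rw [connectedComponentIn_eq_empty h]
    exact isClosed_empty

lemma isPreconnected_iInter_of_directed [CompactSpace X] [NormalSpace X] {ι : Type*} [Nonempty ι]
    {K : ι → Set X} (hdir : Directed (· ⊇ ·) K) (hclosed : ∀ i, IsClosed (K i))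
    (hconn : ∀ i, IsPreconnected (K i)) : IsPreconnected (⋂ i, K i) := by
  rw [isPreconnected_iff_subset_of_fully_disjoint_closed (isClosed_iInter hclosed)]
  intro u v hu hv huv hdisj
  obtain ⟨U, V, hU, hV, huU, hvV, hUV⟩ := normal_separation hu hv hdisj
  obtain ⟨i, hi⟩ := exists_subset_nhds_of_compactSpace hdir hclosed fun q hq =>
    (hU.union hV).mem_nhds (union_subset_union huU hvV (huv hq))
  refine (IsPreconnected.subset_or_subset hU hV hUV hi (hconn i)).imp (fun hKU q hq => ?_)
    fun hKV q hq => ?_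
  · exact (huv hq).resolve_right fun hqv =>
      disjoint_left.1 hUV (hKU (mem_iInter.1 hq i)) (hvV hqv)
  · exact (huv hq).resolve_left fun hqu =>
      disjoint_left.1 hUV (huU hqu) (hKV (mem_iInter.1 hq i))

lemma eq_of_isPreconnected_of_eventually_eq {β : Type*} {s : Set X} (hs : IsPreconnected s)
    {f : X → β} (hf : ∀ x ∈ s, ∀ᶠ y in 𝓝 x, f y = f x) {x y : X} (hx : x ∈ s) (hy : y ∈ s) :
    f x = f y := by
  let : TopologicalSpace β := ⊥
  have : DiscreteTopology β := ⟨rfl⟩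
  exact hs.constant (fun z hz => (EventuallyEq.continuousAt (hf z hz)).continuousWithinAt) hx hy

lemma finite_image_of_eventually_eq {β : Type*} {K : Set X} (hK : IsCompact K) {f : X → β}
    (hf : ∀ x ∈ K, ∀ᶠ y in 𝓝 x, f y = f x) : (f '' K).Finite := by
  let : TopologicalSpace β := ⊥
  have : DiscreteTopology β := ⟨rfl⟩
  exact (hK.image_of_continuousOn fun z hz =>
    (EventuallyEq.continuousAt (hf z hz)).continuousWithinAt).finite_of_discrete

end Topology

section MonotoneJumps

lemma eventually_eq_of_nhdsLT_of_nhdsGT {α β : Type*} [LinearOrder α] [TopologicalSpace α]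
    {f : α → β} {x : α} (hlt : ∀ᶠ y in 𝓝[<] x, f y = f x) (hgt : ∀ᶠ y in 𝓝[>] x, f y = f x) :
    ∀ᶠ y in 𝓝 x, f y = f x := by
  rw [← nhdsNE_sup_pure, ← nhdsLT_sup_nhdsGT, eventually_sup, eventually_sup]
  exact ⟨⟨hlt, hgt⟩, rfl⟩

variable {α β : Type*} [LinearOrder α] [TopologicalSpace α] [OrderTopology α] [DenselyOrdered α]
  [ConditionallyCompleteLinearOrder β] [TopologicalSpace β] [OrderTopology β] [DiscreteTopology β]
  {g : α → β} {a b x : α}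

lemma exists_eventually_eq_nhdsLT_of_monotoneOn (hx : x ∈ Ioo a b) (hg : MonotoneOn g (Ioo a b)) :
    ∃ c, ∀ᶠ u in 𝓝[<] x, g u = c := by
  have hsub : Ioo a x ⊆ Ioo a b := Ioo_subset_Ioo_right hx.2.le
  have hlim := MonotoneOn.tendsto_nhdsWithin_Ioo_left (nonempty_Ioo.2 hx.1) (hg.mono hsub)
    ⟨g x, forall_mem_image.2 fun u hu => hg (hsub hu) hx hu.2.le⟩
  rw [nhds_discrete, tendsto_pure] at hlim
  exact ⟨_, hlim⟩

lemma exists_eventually_eq_nhdsGT_of_monotoneOn (hx : x ∈ Ioo a b) (hg : MonotoneOn g (Ioo a b)) :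
    ∃ c, ∀ᶠ u in 𝓝[>] x, g u = c := by
  have hsub : Ioo x b ⊆ Ioo a b := Ioo_subset_Ioo_left hx.1.le
  have hlim := MonotoneOn.tendsto_nhdsWithin_Ioo_right (nonempty_Ioo.2 hx.2) (hg.mono hsub)
    ⟨g x, forall_mem_image.2 fun u hu => hg hx (hsub hu) hu.1.le⟩
  rw [nhds_discrete, tendsto_pure] at hlim
  exact ⟨_, hlim⟩

lemma eventually_nhdsNE_eventually_eq_of_monotoneOn (hx : x ∈ Ioo a b)
    (hg : MonotoneOn g (Ioo a b)) : ∀ᶠ u in 𝓝[≠] x, ∀ᶠ v in 𝓝 u, g v = g u := by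
  obtain ⟨c, hc⟩ := exists_eventually_eq_nhdsLT_of_monotoneOn hx hg
  obtain ⟨d, hd⟩ := exists_eventually_eq_nhdsGT_of_monotoneOn hx hg
  rw [← nhdsLT_sup_nhdsGT, eventually_sup]
  constructor
  · filter_upwards [eventually_eventually_nhdsWithin.2 hc, self_mem_nhdsWithin] with u hu hux
    rw [isOpen_Iio.nhdsWithin_eq hux] at hu
    exact hu.mono fun v hv => hv.trans hu.self_of_nhds.symm
  · filter_upwards [eventually_eventually_nhdsWithin.2 hd, self_mem_nhdsWithin] with u hu hux
    rw [isOpen_Ioi.nhdsWithin_eq hux] at hu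
    exact hu.mono fun v hv => hv.trans hu.self_of_nhds.symm

end MonotoneJumps

section Metric

variable {X : Type*} [PseudoMetricSpace X] {w : X → ℝ} {p r : X}

lemma min_dist_max_le_add (hw : LipschitzWith 1 w) (hp : 0 ≤ w p) (hr : 0 ≤ w r) (q : X) :
    min (dist p r) (max (w p) (w r)) ≤
      min (dist p q) (max (w p) (w q)) + min (dist q r) (max (w q) (w r)) := by
  have hpq : |w p - w q| ≤ dist p q := by simpa [Real.dist_eq] using hw.dist_le_mul p q
  have hqr : |w q - w r| ≤ dist q r := by simpa [Real.dist_eq] using hw.dist_le_mul q r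
  have hwp : w p ≤ dist p q + w q := by linarith [le_abs_self (w p - w q)]
  have hwr : w r ≤ w q + dist q r := by linarith [neg_le_abs (w q - w r)]
  rw [min_add, add_min, add_min]
  refine le_min (le_min ?_ ?_) (le_min ?_ ?_)
  · exact (min_le_left _ _).trans (dist_triangle p q r)
  · refine (min_le_right _ _).trans (max_le (hwp.trans ?_) ?_)
    · exact add_le_add_right (le_max_left _ _) _
    · exact (le_max_right _ _).trans (le_add_of_nonneg_left dist_nonneg)
  · refine (min_le_right _ _).trans (max_le ?_ (hwr.trans ?_))
    · exact (le_max_left _ _).trans (le_add_of_nonneg_right dist_nonneg)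
    · exact add_le_add_left (le_max_right _ _) _
  · have hsum : w p + w r ≤ max (w p) (w q) + max (w q) (w r) :=
      add_le_add (le_max_left _ _) (le_max_right _ _)
    exact (min_le_right _ _).trans (max_le (by linarith) (by linarith))

end Metric

section SublevelComponents

variable {M : Type*} [TopologicalSpace M] {φ : M → ℝ} {P Q : M} {x x' y y' z : ℝ}

/-- The connected component of `P` in the sublevel set `{φ ≤ y}`, empty when `y < φ P`. -/
def sublevelComponent (φ : M → ℝ) (y : ℝ) (P : M) : Set M :=
  connectedComponentIn {Q | φ Q ≤ y} P

/-- The components of `{φ ≤ y}` that meet `{φ ≤ x}`; for `x ≤ y` their number is `rsf φ x y`. -/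
def sublevelComponents (φ : M → ℝ) (x y : ℝ) : Set (Set M) :=
  sublevelComponent φ y '' {P | φ P ≤ x}

lemma rsf_eq_ncard (φ : M → ℝ) (x y : ℝ) : rsf φ x y = (sublevelComponents φ x y).ncard := by
  simp only [rsf, sublevelComponents, sublevelComponent, image, mem_ofPred_eq, eq_comm]

lemma sublevelComponents_mono_left (h : x ≤ x') :
    sublevelComponents φ x y ⊆ sublevelComponents φ x' y :=
  image_mono fun _ hP => le_trans hP h

lemma mem_sublevelComponent_self (h : φ P ≤ y) : P ∈ sublevelComponent φ y P :=
  mem_connectedComponentIn h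

lemma apply_le_of_mem_sublevelComponent (h : Q ∈ sublevelComponent φ y P) : φ Q ≤ y :=
  connectedComponentIn_subset {R | φ R ≤ y} P h

lemma sublevelComponent_mono (h : y ≤ z) (P : M) :
    sublevelComponent φ y P ⊆ sublevelComponent φ z P :=
  connectedComponentIn_mono P fun _ hQ => le_trans hQ h

lemma sublevelComponent_eq_of_mem (h : Q ∈ sublevelComponent φ y P) :
    sublevelComponent φ y Q = sublevelComponent φ y P :=
  (connectedComponentIn_eq h).symm

lemma isClosed_sublevelComponent (hφ : Continuous φ) (y : ℝ) (P : M) :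
    IsClosed (sublevelComponent φ y P) :=
  isClosed_connectedComponentIn (isClosed_le hφ continuous_const) P

/-- The union of the components of `{φ ≤ z}` that meet `C`. -/
def enlarge (φ : M → ℝ) (z : ℝ) (C : Set M) : Set M :=
  ⋃ P ∈ C, sublevelComponent φ z P

lemma enlarge_sublevelComponent (hP : φ P ≤ y) (hyz : y ≤ z) :
    enlarge φ z (sublevelComponent φ y P) = sublevelComponent φ z P := by
  refine (iUnion₂_subset fun Q hQ => ?_).antisymm
    (subset_iUnion₂_of_subset P (mem_sublevelComponent_self hP) Subset.rfl)
  exact (sublevelComponent_eq_of_mem (sublevelComponent_mono hyz P hQ)).le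

lemma image_enlarge_sublevelComponents (hxy : x ≤ y) (hyz : y ≤ z) :
    enlarge φ z '' sublevelComponents φ x y = sublevelComponents φ x z := by
  rw [sublevelComponents, image_image]
  exact image_congr fun P hP => enlarge_sublevelComponent (le_trans hP hxy) hyz

lemma rsf_eq_zero (h : ∀ P, x < φ P) : rsf φ x y = 0 := by
  have hempty : {P | φ P ≤ x} = ∅ := eq_empty_of_forall_notMem fun P => not_le.2 (h P)
  rw [rsf_eq_ncard, sublevelComponents, hempty, image_empty, ncard_empty]

lemma sublevelComponent_eq_connectedComponent (h : ∀ Q, φ Q ≤ y) :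
    sublevelComponent φ y = connectedComponent := by
  have huniv : {Q | φ Q ≤ y} = univ := eq_univ_of_forall h
  ext1 P
  rw [sublevelComponent, huniv, connectedComponentIn_univ]

lemma rsf_right_eq_of_forall_le (h : ∀ Q, φ Q ≤ y) (h' : ∀ Q, φ Q ≤ y') :
    rsf φ x y = rsf φ x y' := by
  rw [rsf_eq_ncard, rsf_eq_ncard, sublevelComponents, sublevelComponents,
    sublevelComponent_eq_connectedComponent h, sublevelComponent_eq_connectedComponent h']

lemma rsf_eq_one [PreconnectedSpace M] (hP : φ P ≤ x) (h : ∀ Q, φ Q ≤ y) : rsf φ x y = 1 := by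
  rw [rsf_eq_ncard, sublevelComponents, sublevelComponent_eq_connectedComponent h,
    image_congr fun Q _ => PreconnectedSpace.connectedComponent_eq_univ Q,
    Nonempty.image_const ⟨P, hP⟩, ncard_singleton]

section LocallyConnected

variable [LocallyConnectedSpace M]

lemma eventually_sublevelComponent_eq (hφ : Continuous φ) (h : φ P < y) :
    ∀ᶠ Q in 𝓝 P, sublevelComponent φ y Q = sublevelComponent φ y P := by
  have hopen : IsOpen (connectedComponentIn {Q | φ Q < y} P) :=
    (isOpen_lt hφ continuous_const).connectedComponentIn
  filter_upwards [hopen.mem_nhds (mem_connectedComponentIn h)] with Q hQ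
  exact sublevelComponent_eq_of_mem
    (connectedComponentIn_mono P (fun R (hR : φ R < y) => hR.le) hQ)

variable [CompactSpace M]

lemma finite_sublevelComponents (hφ : Continuous φ) (h : x < y) :
    (sublevelComponents φ x y).Finite :=
  finite_image_of_eventually_eq (isClosed_le hφ continuous_const).isCompact
    fun _ hP => eventually_sublevelComponent_eq hφ (lt_of_le_of_lt hP h)

lemma rsf_mono_left (hφ : Continuous φ) (hxx' : x ≤ x') (hx'y : x' < y) :
    rsf φ x y ≤ rsf φ x' y := by
  simp only [rsf_eq_ncard]
  exact ncard_le_ncard (sublevelComponents_mono_left hxx') (finite_sublevelComponents hφ hx'y)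

lemma rsf_anti_right (hφ : Continuous φ) (hxy : x < y) (hyy' : y ≤ y') :
    rsf φ x y' ≤ rsf φ x y := by
  rw [rsf_eq_ncard, rsf_eq_ncard, ← image_enlarge_sublevelComponents hxy.le hyy']
  exact ncard_image_le (finite_sublevelComponents hφ hxy)

lemma rsf_box_le (hφ : Continuous φ) (hxx' : x ≤ x') (hx'y : x' < y) (hyy' : y ≤ y') :
    rsf φ x' y' + rsf φ x y ≤ rsf φ x' y + rsf φ x y' := by
  simp only [rsf_eq_ncard]
  rw [← image_enlarge_sublevelComponents hx'y.le hyy',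
    ← image_enlarge_sublevelComponents (hxx'.trans hx'y.le) hyy']
  exact ncard_image_add_ncard_le (finite_sublevelComponents hφ hx'y)
    (sublevelComponents_mono_left hxx')

lemma rsf_left_eq_of_le (hφ : Continuous φ) (hxy : x < y) (hx'y : x' < y) (hyy' : y ≤ y')
    (h : rsf φ x y = rsf φ x' y) : rsf φ x y' = rsf φ x' y' := by
  wlog hxx' : x ≤ x' generalizing x x'
  · exact (this hx'y hxy h.symm (le_of_not_ge hxx')).symm
  · have hbox := rsf_box_le hφ hxx' hx'y hyy'
    exact (rsf_mono_left hφ hxx' (hx'y.trans_le hyy')).antisymm (by omega)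

lemma rsf_right_eq_of_le (hφ : Continuous φ) (hxx' : x ≤ x') (hx'y : x' < y) (hx'y' : x' < y')
    (h : rsf φ x' y = rsf φ x' y') : rsf φ x y = rsf φ x y' := by
  wlog hyy' : y ≤ y' generalizing y y'
  · exact (this hx'y' hx'y h.symm (le_of_not_ge hyy')).symm
  · have hbox := rsf_box_le hφ hxx' hx'y hyy'
    exact le_antisymm (by omega) (rsf_anti_right hφ (hxx'.trans_lt hx'y) hyy')

lemma rsf_pos (hφ : Continuous φ) (hP : φ P ≤ x) (hxy : x < y) : 0 < rsf φ x y := by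
  rw [rsf_eq_ncard, ncard_pos (finite_sublevelComponents hφ hxy)]
  exact ⟨_, mem_image_of_mem _ hP⟩

lemma eventually_nhdsGT_rsf_left_eq (hφ : Continuous φ) (hxy : x < y) :
    ∀ᶠ u in 𝓝[>] x, rsf φ u y = rsf φ x y := by
  have hlocal : ∀ P ∈ (univ : Set M), ∀ᶠ q : ℝ × M in 𝓝 (x, P),
      φ q.2 ≤ q.1 → sublevelComponent φ y q.2 ∈ sublevelComponents φ x y := by
    intro P _
    rcases le_or_gt (φ P) x with hP | hP
    · filter_upwards [continuousAt_snd.eventually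
        (eventually_sublevelComponent_eq hφ (hP.trans_lt hxy))] with q hq _
      exact hq ▸ mem_image_of_mem _ hP
    · filter_upwards [(isOpen_lt continuous_fst (hφ.comp continuous_snd)).mem_nhds hP]
        with q hq hle
      exact absurd hle (not_le.2 hq)
  have hglobal : ∀ᶠ u in 𝓝 x, ∀ P ∈ (univ : Set M),
      φ P ≤ u → sublevelComponent φ y P ∈ sublevelComponents φ x y :=
    isCompact_univ.eventually_forall_of_forall_eventually hlocal
  filter_upwards [nhdsWithin_le_nhds hglobal, self_mem_nhdsWithin] with u hu hxu
  have hsub : sublevelComponents φ u y ⊆ sublevelComponents φ x y :=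
    image_subset_iff.2 fun P hP => hu P trivial hP
  rw [rsf_eq_ncard, rsf_eq_ncard, hsub.antisymm (sublevelComponents_mono_left (le_of_lt hxu))]

end LocallyConnected

section Normal

variable [CompactSpace M] [NormalSpace M]

lemma iInter_sublevelComponent_subset (hφ : Continuous φ) (hP : φ P ≤ y) :
    ⋂ z : Ioi y, sublevelComponent φ z P ⊆ sublevelComponent φ y P := by
  have hdir : Directed (· ⊇ ·) fun z : Ioi y => sublevelComponent φ z P :=
    directed_of_isDirected_ge fun z w hzw => sublevelComponent_mono hzw P
  refine (isPreconnected_iInter_of_directed hdir (fun z => isClosed_sublevelComponent hφ z P)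
    fun z => isPreconnected_connectedComponentIn).subset_connectedComponentIn ?_ ?_
  · exact mem_iInter.2 fun z => mem_sublevelComponent_self (hP.trans (le_of_lt z.2))
  · exact fun Q hQ => le_of_forall_gt_imp_ge_of_dense fun z hz =>
      apply_le_of_mem_sublevelComponent (mem_iInter.1 hQ ⟨z, hz⟩)

lemma eventually_nhdsGT_notMem_sublevelComponent (hφ : Continuous φ) (hP : φ P ≤ y)
    (hQ : Q ∉ sublevelComponent φ y P) : ∀ᶠ z in 𝓝[>] y, Q ∉ sublevelComponent φ z P := by
  obtain ⟨w, hw⟩ : ∃ w : Ioi y, Q ∉ sublevelComponent φ w P := by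
    simpa using fun h => hQ (iInter_sublevelComponent_subset hφ hP h)
  filter_upwards [Ioo_mem_nhdsGT w.2] with z hz
  exact fun hQz => hw (sublevelComponent_mono hz.2.le P hQz)

lemma eventually_nhdsGT_injOn_enlarge (hφ : Continuous φ) (hxy : x ≤ y)
    (hfin : (sublevelComponents φ x y).Finite) :
    ∀ᶠ z in 𝓝[>] y, InjOn (enlarge φ z) (sublevelComponents φ x y) := by
  have hpair : ∀ᶠ z in 𝓝[>] y, ∀ C ∈ sublevelComponents φ x y, ∀ D ∈ sublevelComponents φ x y,
      enlarge φ z C = enlarge φ z D → C = D := by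
    refine (eventually_all_finite hfin).2 fun C hC => (eventually_all_finite hfin).2 fun D hD => ?_
    obtain ⟨P, hP, rfl⟩ := hC
    obtain ⟨Q, hQ, rfl⟩ := hD
    have hPy := le_trans hP hxy
    have hQy := le_trans hQ hxy
    by_cases hmem : Q ∈ sublevelComponent φ y P
    · exact Eventually.of_forall fun _ _ => (sublevelComponent_eq_of_mem hmem).symm
    · filter_upwards [eventually_nhdsGT_notMem_sublevelComponent hφ hPy hmem,
        self_mem_nhdsWithin] with z hz hyz heq
      rw [enlarge_sublevelComponent hPy (le_of_lt hyz),
        enlarge_sublevelComponent hQy (le_of_lt hyz)] at heq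
      exact absurd (heq ▸ mem_sublevelComponent_self (hQy.trans (le_of_lt hyz))) hz
  exact hpair.mono fun z hz C hC D hD => hz C hC D hD

lemma eventually_nhdsGT_rsf_right_eq [LocallyConnectedSpace M] (hφ : Continuous φ) (hxy : x < y) :
    ∀ᶠ v in 𝓝[>] y, rsf φ x v = rsf φ x y := by
  filter_upwards [eventually_nhdsGT_injOn_enlarge hφ hxy.le (finite_sublevelComponents hφ hxy),
    self_mem_nhdsWithin] with v hinj hyv
  rw [rsf_eq_ncard, rsf_eq_ncard, ← image_enlarge_sublevelComponents hxy.le (le_of_lt hyv),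
    hinj.ncard_image]

end Normal

end SublevelComponents

section Multiplicity

variable {M : Type*} [TopologicalSpace M] {φ : M → ℝ} {p : ℝ × ℝ} {k w ε η : ℝ}

/-- The alternating sum over the corners of the square of half-side `ε` centred at `p` whose
smallest value over small `ε` is the multiplicity `mult φ p`. -/
noncomputable def cornerDiff (φ : M → ℝ) (p : ℝ × ℝ) (ε : ℝ) : ℤ :=
  (rsf φ (p.1 + ε) (p.2 - ε) : ℤ) - (rsf φ (p.1 - ε) (p.2 - ε) : ℤ)
    - (rsf φ (p.1 + ε) (p.2 + ε) : ℤ) + (rsf φ (p.1 - ε) (p.2 + ε) : ℤ)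

/-- The proper cornerpoints of the reduced size function of `φ`: the points above the diagonal
with positive multiplicity. -/
def properCornerpoints (φ : M → ℝ) : Set (ℝ × ℝ) :=
  {p | p.1 < p.2 ∧ 0 < mult φ p}

lemma tendsto_const_add_nhdsGT_zero (x : ℝ) : Tendsto (x + ·) (𝓝[>] 0) (𝓝[>] x) :=
  ((continuous_const_add x).tendsto' 0 x (add_zero x)).inf <| by simp

lemma tendsto_const_sub_nhdsGT_zero (x : ℝ) : Tendsto (x - ·) (𝓝[>] 0) (𝓝[<] x) :=
  ((continuous_sub_left x).tendsto' 0 x (sub_zero x)).inf <| by simp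

lemma tendsto_const_sub_nhdsLT (x : ℝ) : Tendsto (x - ·) (𝓝[<] x) (𝓝[>] 0) :=
  ((continuous_sub_left x).tendsto' x 0 (sub_self x)).inf <| by simp

lemma eventually_nhdsGT_zero_add_lt_sub (hp : p.1 < p.2) :
    ∀ᶠ t in 𝓝[>] (0 : ℝ), p.1 + t < p.2 - t := by
  filter_upwards [Ioo_mem_nhdsGT (half_pos (sub_pos.2 hp))] with t ht
  linarith [ht.2]

lemma eventually_lt_one_div (c : ℝ) : ∀ᶠ ε in 𝓝[>] (0 : ℝ), c < 1 / ε := by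
  simpa using tendsto_inv_nhdsGT_zero.eventually_gt_atTop c

lemma eventually_add_lt_one_div (k : ℝ) : ∀ᶠ ε in 𝓝[>] (0 : ℝ), k + ε < 1 / ε := by
  filter_upwards [eventually_lt_one_div (k + 1), Ioo_mem_nhdsGT one_pos] with ε hε hε1
  linarith [hε1.2]

variable [CompactSpace M]

lemma iInf_le_apply (hφ : Continuous φ) (P : M) : ⨅ Q, φ Q ≤ φ P :=
  ciInf_le (isCompact_range hφ).bddBelow P

lemma apply_le_iSup (hφ : Continuous φ) (P : M) : φ P ≤ ⨆ Q, φ Q :=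
  le_ciSup (isCompact_range hφ).bddAbove P

lemma exists_apply_eq_iInf [Nonempty M] (hφ : Continuous φ) : ∃ P, φ P = ⨅ Q, φ Q :=
  (isCompact_range hφ).sInf_mem (range_nonempty φ)

lemma eventually_rsf_add_eq_rsf_sub [PreconnectedSpace M] (hφ : Continuous φ)
    (hk : k ≠ ⨅ P, φ P) :
    ∀ᶠ ε in 𝓝[>] (0 : ℝ), rsf φ (k + ε) (1 / ε) = rsf φ (k - ε) (1 / ε) := by
  rcases hk.lt_or_gt with hlt | hgt
  · filter_upwards [Ioo_mem_nhdsGT (sub_pos.2 hlt)] with ε hε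
    rw [rsf_eq_zero fun P => by linarith [hε.2, iInf_le_apply hφ P],
      rsf_eq_zero fun P => by linarith [hε.1, hε.2, iInf_le_apply hφ P]]
  · cases isEmpty_or_nonempty M
    · exact Eventually.of_forall fun ε => by rw [rsf_eq_zero isEmptyElim, rsf_eq_zero isEmptyElim]
    obtain ⟨P, hP⟩ := exists_apply_eq_iInf hφ
    filter_upwards [Ioo_mem_nhdsGT (sub_pos.2 hgt), eventually_lt_one_div (⨆ P, φ P)] with ε hε hB
    rw [rsf_eq_one (P := P) (by linarith [hε.1]) fun Q => (apply_le_iSup hφ Q).trans hB.le,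
      rsf_eq_one (P := P) (by linarith [hε.2]) fun Q => (apply_le_iSup hφ Q).trans hB.le]

variable [LocallyConnectedSpace M]

lemma cornerDiff_mono (hφ : Continuous φ) (hε : 0 ≤ ε) (hεη : ε ≤ η) (hη : p.1 + η < p.2 - η) :
    cornerDiff φ p ε ≤ cornerDiff φ p η := by
  have left_strip := rsf_box_le hφ (x := p.1 - η) (x' := p.1 - ε) (y := p.2 - η) (y' := p.2 + η)
    (by linarith) (by linarith) (by linarith)
  have right_strip := rsf_box_le hφ (x := p.1 + ε) (x' := p.1 + η) (y := p.2 - η) (y' := p.2 + η)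
    (by linarith) (by linarith) (by linarith)
  have bottom := rsf_box_le hφ (x := p.1 - ε) (x' := p.1 + ε) (y := p.2 - η) (y' := p.2 - ε)
    (by linarith) (by linarith) (by linarith)
  have top := rsf_box_le hφ (x := p.1 - ε) (x' := p.1 + ε) (y := p.2 + ε) (y' := p.2 + η)
    (by linarith) (by linarith) (by linarith)
  unfold cornerDiff
  omega

lemma cornerDiff_nonneg (hφ : Continuous φ) (hε : 0 ≤ ε) (h : p.1 + ε < p.2 - ε) :
    0 ≤ cornerDiff φ p ε := by
  simpa [cornerDiff] using cornerDiff_mono hφ le_rfl hε h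

lemma mult_le_cornerDiff (hφ : Continuous φ) (hε : 0 < ε) (h : p.1 + ε < p.2 - ε) :
    mult φ p ≤ cornerDiff φ p ε := by
  refine csInf_le ⟨0, ?_⟩ ⟨ε, hε, h, rfl⟩
  rintro _ ⟨t, ht, htp, rfl⟩
  exact cornerDiff_nonneg hφ ht.le htp

lemma eventually_mult_eq_cornerDiff (hφ : Continuous φ) (hp : p.1 < p.2) :
    ∀ᶠ t in 𝓝[>] (0 : ℝ), mult φ p = cornerDiff φ p t := by
  obtain ⟨t, htp, ht⟩ :=
    ((eventually_nhdsGT_zero_add_lt_sub hp).and self_mem_nhdsWithin).exists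
  obtain ⟨ε, hε, hεp, hmin⟩ : mult φ p ∈
      {z | ∃ ε, 0 < ε ∧ p.1 + ε < p.2 - ε ∧ z = cornerDiff φ p ε} := by
    refine Int.csInf_mem ⟨_, t, ht, htp, rfl⟩ ⟨0, ?_⟩
    rintro _ ⟨η, hη, hηp, rfl⟩
    exact cornerDiff_nonneg hφ hη.le hηp
  filter_upwards [Ioo_mem_nhdsGT hε] with η hη
  exact (mult_le_cornerDiff hφ hη.1 (by linarith [hη.2])).antisymm
    ((cornerDiff_mono hφ hη.1.le hη.2.le hεp).trans hmin.ge)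

lemma mult_nonneg (hφ : Continuous φ) (hp : p.1 < p.2) : 0 ≤ mult φ p := by
  obtain ⟨t, heq, htp, ht⟩ := ((eventually_mult_eq_cornerDiff hφ hp).and
    ((eventually_nhdsGT_zero_add_lt_sub hp).and self_mem_nhdsWithin)).exists
  exact heq ▸ cornerDiff_nonneg hφ (le_of_lt ht) htp

lemma mult_eq_zero_of_eventually_left (hφ : Continuous φ) (hpw : p.1 < w) (hwp : w < p.2)
    (h : ∀ᶠ u in 𝓝 p.1, rsf φ u w = rsf φ p.1 w) : mult φ p = 0 := by
  have hadd := ((tendsto_const_add_nhdsGT_zero p.1).mono_right nhdsWithin_le_nhds).eventually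
    (h.and (eventually_lt_nhds hpw))
  have hsub := ((tendsto_const_sub_nhdsGT_zero p.1).mono_right nhdsWithin_le_nhds).eventually
    (h.and (eventually_lt_nhds hpw))
  obtain ⟨t, heq, ⟨hadd, haddw⟩, ⟨hsub, hsubw⟩, ht0, htw⟩ := ((eventually_mult_eq_cornerDiff hφ
    (hpw.trans hwp)).and (hadd.and (hsub.and (Ioo_mem_nhdsGT (sub_pos.2 hwp))))).exists
  have hflat {v : ℝ} (hv : w ≤ v) : rsf φ (p.1 + t) v = rsf φ (p.1 - t) v :=
    rsf_left_eq_of_le hφ haddw hsubw hv (hadd.trans hsub.symm)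
  rw [heq, cornerDiff, hflat (by linarith), hflat (by linarith)]
  ring

lemma mult_eq_zero_of_eventually_right (hφ : Continuous φ) (hpw : p.1 < w) (hwp : w < p.2)
    (h : ∀ᶠ v in 𝓝 p.2, rsf φ w v = rsf φ w p.2) : mult φ p = 0 := by
  have hadd := ((tendsto_const_add_nhdsGT_zero p.2).mono_right nhdsWithin_le_nhds).eventually
    (h.and (eventually_gt_nhds hwp))
  have hsub := ((tendsto_const_sub_nhdsGT_zero p.2).mono_right nhdsWithin_le_nhds).eventually
    (h.and (eventually_gt_nhds hwp))
  obtain ⟨t, heq, ⟨hadd, haddw⟩, ⟨hsub, hsubw⟩, ht0, htw⟩ := ((eventually_mult_eq_cornerDiff hφ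
    (hpw.trans hwp)).and (hadd.and (hsub.and (Ioo_mem_nhdsGT (sub_pos.2 hpw))))).exists
  have hflat {u : ℝ} (hu : u ≤ w) : rsf φ u (p.2 + t) = rsf φ u (p.2 - t) :=
    rsf_right_eq_of_le hφ hu haddw hsubw (hadd.trans hsub.symm)
  rw [heq, cornerDiff, hflat (by linarith), hflat (by linarith)]
  ring

lemma iInf_le_fst_of_mem_properCornerpoints (hφ : Continuous φ) (hp : p ∈ properCornerpoints φ) :
    ⨅ P, φ P ≤ p.1 := by
  by_contra! hlt
  obtain ⟨w, hpw, hwp⟩ := exists_between hp.1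
  refine hp.2.ne' (mult_eq_zero_of_eventually_left hφ hpw hwp ?_)
  have hzero {u : ℝ} (hu : u < ⨅ P, φ P) : rsf φ u w = 0 :=
    rsf_eq_zero fun P => hu.trans_le (iInf_le_apply hφ P)
  exact (eventually_lt_nhds hlt).mono fun u hu => (hzero hu).trans (hzero hlt).symm

lemma snd_le_iSup_of_mem_properCornerpoints (hφ : Continuous φ) (hp : p ∈ properCornerpoints φ) :
    p.2 ≤ ⨆ P, φ P := by
  by_contra! hlt
  obtain ⟨w, hpw, hwp⟩ := exists_between hp.1
  refine hp.2.ne' (mult_eq_zero_of_eventually_right hφ hpw hwp ?_)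
  exact (eventually_gt_nhds hlt).mono fun v hv => rsf_right_eq_of_forall_le
    (fun P => (apply_le_iSup hφ P).trans (le_of_lt hv)) fun P => (apply_le_iSup hφ P).trans hlt.le

lemma eventually_nhdsNE_notMem_properCornerpoints (hφ : Continuous φ) (hp : p.1 < p.2) :
    ∀ᶠ q in 𝓝[≠] p, q ∉ properCornerpoints φ := by
  obtain ⟨w, hpw, hwp⟩ := exists_between hp
  have hleft := eventually_nhdsNE_eventually_eq_of_monotoneOn (g := fun u => rsf φ u w)
    (⟨sub_one_lt _, hpw⟩ : p.1 ∈ Ioo (p.1 - 1) w)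
    fun u _ v hv huv => rsf_mono_left hφ huv hv.2
  have hright := eventually_nhdsNE_eventually_eq_of_monotoneOn
    (g := fun v => OrderDual.toDual (rsf φ w v))
    (⟨hwp, lt_add_one _⟩ : p.2 ∈ Ioo w (p.2 + 1))
    fun u hu v _ huv => rsf_anti_right hφ hu.1 huv
  rw [eventually_nhdsWithin_iff] at hleft hright ⊢
  filter_upwards [continuousAt_fst.eventually (hleft.and (eventually_lt_nhds hpw)),
    continuousAt_snd.eventually (hright.and (eventually_gt_nhds hwp))]
    with q ⟨hql, hqw⟩ ⟨hqr, hwq⟩ hne hq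
  refine hq.2.ne' ?_
  rcases Prod.ext_iff.not.1 hne |> not_and_or.1 with h | h
  · exact mult_eq_zero_of_eventually_left hφ hqw hwq (hql h)
  · exact mult_eq_zero_of_eventually_right hφ hqw hwq (hqr h)

lemma countable_properCornerpoints (hφ : Continuous φ) : (properCornerpoints φ).Countable := by
  have : DiscreteTopology (properCornerpoints φ) := discreteTopology_subtype_iff.2 fun p hp =>
    disjoint_iff.1 <| disjoint_principal_right.2
      (eventually_nhdsNE_notMem_properCornerpoints hφ hp.1)
  exact countable_coe_iff.1 countable_of_Lindelof_of_discrete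

lemma eventually_eq_of_mem_properCornerpoints_or_diagonal (hφ : Continuous φ) (hp : p.1 < p.2) :
    ∀ᶠ q in 𝓝 p, q ∈ properCornerpoints φ ∨ q.1 = q.2 → q = p := by
  filter_upwards [eventually_nhdsWithin_iff.1 (eventually_nhdsNE_notMem_properCornerpoints hφ hp),
    (isOpen_lt continuous_fst continuous_snd).mem_nhds hp] with q hq hlt h
  by_contra hne
  exact h.elim (hq hne) hlt.ne

lemma multInf_le (hφ : Continuous φ) (hε : 0 < ε) (hk : k + ε < 1 / ε) :
    multInf φ k ≤ rsf φ (k + ε) (1 / ε) - rsf φ (k - ε) (1 / ε) := by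
  refine csInf_le ⟨0, ?_⟩ ⟨ε, hε, hk, rfl⟩
  rintro _ ⟨η, hη, hηk, rfl⟩
  exact sub_nonneg.2 (mod_cast rsf_mono_left hφ (by linarith) hηk)

lemma multInf_pos_iff [ConnectedSpace M] (hφ : Continuous φ) :
    0 < multInf φ k ↔ k = ⨅ P, φ P := by
  constructor
  · contrapose!
    intro hk
    obtain ⟨ε, heq, hεk, hε⟩ := ((eventually_rsf_add_eq_rsf_sub hφ hk).and
      ((eventually_add_lt_one_div k).and self_mem_nhdsWithin)).exists
    simpa only [heq, sub_self] using multInf_le hφ hε hεk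
  · rintro rfl
    obtain ⟨P, hP⟩ := exists_apply_eq_iInf hφ
    obtain ⟨t, htk, ht⟩ :=
      ((eventually_add_lt_one_div (⨅ P, φ P)).and self_mem_nhdsWithin).exists
    refine zero_lt_one.trans_le (le_csInf ⟨_, t, ht, htk, rfl⟩ ?_)
    rintro _ ⟨ε, hε, hεk, rfl⟩
    have hpos : 0 < rsf φ ((⨅ P, φ P) + ε) (1 / ε) := rsf_pos hφ (by linarith) hεk
    have hzero : rsf φ ((⨅ P, φ P) - ε) (1 / ε) = 0 :=
      rsf_eq_zero fun Q => by linarith [iInf_le_apply hφ Q]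
    omega

end Multiplicity

section Uniqueness

variable {M N : Type*} [TopologicalSpace M] [CompactSpace M] [TopologicalSpace N] [CompactSpace N]
  {φ : M → ℝ} {ψ : N → ℝ} {w x y : ℝ}

lemma eventually_atTop_rsf_eq [ConnectedSpace M] [ConnectedSpace N] (hφ : Continuous φ)
    (hψ : Continuous ψ) (h : ⨅ P, φ P = ⨅ P, ψ P) : ∀ᶠ y in atTop, ∀ x, rsf φ x y = rsf ψ x y := by
  filter_upwards [eventually_ge_atTop (⨆ P, φ P), eventually_ge_atTop (⨆ P, ψ P)] with y hφy hψy x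
  obtain ⟨P, hP⟩ := exists_apply_eq_iInf hφ
  obtain ⟨Q, hQ⟩ := exists_apply_eq_iInf hψ
  rcases lt_or_ge x (⨅ P, φ P) with hx | hx
  · rw [rsf_eq_zero fun R => hx.trans_le (iInf_le_apply hφ R),
      rsf_eq_zero fun R => (h ▸ hx).trans_le (iInf_le_apply hψ R)]
  · rw [rsf_eq_one (hP.trans_le hx) fun R => (apply_le_iSup hφ R).trans hφy,
      rsf_eq_one (hQ.trans_le (h ▸ hx)) fun R => (apply_le_iSup hψ R).trans hψy]

variable [LocallyConnectedSpace M] [LocallyConnectedSpace N]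

lemma eventually_nhdsLT_rsf_left_eq (hφ : Continuous φ) (hxw : x < w) :
    ∀ᶠ u in 𝓝[<] x, ∀ᶠ u' in 𝓝[<] x, rsf φ u' w = rsf φ u w := by
  obtain ⟨c, hc⟩ := exists_eventually_eq_nhdsLT_of_monotoneOn (g := fun u => rsf φ u w)
    (⟨sub_one_lt _, hxw⟩ : x ∈ Ioo (x - 1) w) fun u _ v hv huv => rsf_mono_left hφ huv hv.2
  exact hc.mono fun u hu => hc.mono fun u' hu' => hu'.trans hu.symm

variable [NormalSpace M]

lemma eventually_mult_eq_sub (hφ : Continuous φ) (hxw : x < w) :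
    ∀ᶠ u in 𝓝[<] x, ∀ v > w, ∀ᶠ z in 𝓝[<] v, mult φ (x, v) =
      ((rsf φ x z : ℤ) - rsf φ u z) - ((rsf φ x v : ℤ) - rsf φ u v) := by
  filter_upwards [eventually_nhdsLT_rsf_left_eq hφ hxw, self_mem_nhdsWithin] with u hu hux v hwv
  have huw : u < w := lt_trans hux hxw
  have hleft := (tendsto_const_sub_nhdsGT_zero x).eventually (hu.and self_mem_nhdsWithin)
  have hright := (tendsto_const_add_nhdsGT_zero x).eventually
    ((eventually_nhdsGT_rsf_left_eq hφ hxw).and (Ioo_mem_nhdsGT hxw))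
  have hup := (tendsto_const_add_nhdsGT_zero v).eventually
    ((eventually_nhdsGT_rsf_right_eq hφ (hxw.trans hwv)).and
      (eventually_nhdsGT_rsf_right_eq hφ (huw.trans hwv)))
  have hsmall : ∀ᶠ t in 𝓝[>] (0 : ℝ), mult φ (x, v) =
      ((rsf φ x (v - t) : ℤ) - rsf φ u (v - t)) - ((rsf φ x v : ℤ) - rsf φ u v) := by
    filter_upwards [eventually_mult_eq_cornerDiff (p := (x, v)) hφ (hxw.trans hwv), hleft, hright,
      hup, Ioo_mem_nhdsGT (sub_pos.2 hwv)]
      with t hmult ⟨hl, hlx⟩ ⟨hr, hrw⟩ ⟨hx, hu⟩ ⟨ht, htw⟩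
    have hleft {y : ℝ} (hy : w ≤ y) : rsf φ (x - t) y = rsf φ u y :=
      rsf_left_eq_of_le hφ (lt_trans hlx hxw) huw hy hl
    have hright {y : ℝ} (hy : w ≤ y) : rsf φ (x + t) y = rsf φ x y :=
      rsf_left_eq_of_le hφ hrw.2 hxw hy hr
    have hlow : w ≤ v - t := by linarith
    have hhigh : w ≤ v + t := hwv.le.trans (le_add_of_nonneg_right ht.le)
    rw [hmult, cornerDiff, hleft hlow, hleft hhigh, hright hlow, hright hhigh, hx, hu]
    ring
  filter_upwards [(tendsto_const_sub_nhdsLT v).eventually hsmall] with z hz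
  rwa [sub_sub_cancel] at hz

variable [NormalSpace N]

lemma eventually_rsf_sub_eq_of_mult_eq (hφ : Continuous φ) (hψ : Continuous ψ)
    (hmult : ∀ p : ℝ × ℝ, p.1 < p.2 → mult φ p = mult ψ p)
    (htop : ∀ᶠ y in atTop, ∀ x, rsf φ x y = rsf ψ x y) (hxw : x < w) :
    ∀ᶠ u in 𝓝[<] x, ∀ v > w, (rsf φ u v : ℤ) - rsf ψ u v = rsf φ x v - rsf ψ x v := by
  filter_upwards [eventually_mult_eq_sub hφ hxw, eventually_mult_eq_sub hψ hxw,
    self_mem_nhdsWithin] with u hu hu' hux v hwv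
  obtain ⟨B, hB, hvB⟩ := (htop.and (eventually_gt_atTop v)).exists
  let δ (y : ℝ) : ℤ := ((rsf φ x y : ℤ) - rsf φ u y) - ((rsf ψ x y : ℤ) - rsf ψ u y)
  have hlocal : ∀ y ∈ Ioi w, ∀ᶠ z in 𝓝 y, δ z = δ y := by
    intro y hy
    have hxy : x < y := hxw.trans hy
    have huy : u < y := lt_trans hux hxy
    refine eventually_eq_of_nhdsLT_of_nhdsGT ?_ ?_
    · filter_upwards [hu y hy, hu' y hy] with z hz hz'
      have := hmult (x, y) hxy
      simp only [δ]
      omega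
    · filter_upwards [eventually_nhdsGT_rsf_right_eq hφ hxy,
        eventually_nhdsGT_rsf_right_eq hφ huy, eventually_nhdsGT_rsf_right_eq hψ hxy,
        eventually_nhdsGT_rsf_right_eq hψ huy] with z h₁ h₂ h₃ h₄
      simp only [δ, h₁, h₂, h₃, h₄]
  have hzero : δ B = 0 := by
    simp only [δ, hB, sub_self]
  have hconst : δ v = δ B :=
    eq_of_isPreconnected_of_eventually_eq isPreconnected_Ioi hlocal hwv (lt_trans hwv hvB)
  simp only [δ] at hconst hzero
  omega

lemma rsf_eq_of_mult_eq (hφ : Continuous φ) (hψ : Continuous ψ)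
    (hmult : ∀ p : ℝ × ℝ, p.1 < p.2 → mult φ p = mult ψ p)
    (htop : ∀ᶠ y in atTop, ∀ x, rsf φ x y = rsf ψ x y) (hxy : x < y) :
    rsf φ x y = rsf ψ x y := by
  let δ (u : ℝ) : ℤ := rsf φ u y - rsf ψ u y
  have hlocal : ∀ u ∈ Iio y, ∀ᶠ z in 𝓝 u, δ z = δ u := by
    intro u (hu : u < y)
    obtain ⟨w, huw, hwy⟩ := exists_between hu
    refine eventually_eq_of_nhdsLT_of_nhdsGT ?_ ?_
    · filter_upwards [eventually_rsf_sub_eq_of_mult_eq hφ hψ hmult htop huw] with z hz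
      exact hz y hwy
    · filter_upwards [eventually_nhdsGT_rsf_left_eq hφ hu, eventually_nhdsGT_rsf_left_eq hψ hu]
        with z h₁ h₂
      simp only [δ, h₁, h₂]
  obtain ⟨b, hbx, hbφ, hbψ⟩ := ((eventually_lt_atBot x).and
    ((eventually_lt_atBot (⨅ P, φ P)).and (eventually_lt_atBot (⨅ P, ψ P)))).exists
  have hzero : δ b = 0 := by
    simp only [δ, rsf_eq_zero fun P => hbφ.trans_le (iInf_le_apply hφ P),
      rsf_eq_zero fun P => hbψ.trans_le (iInf_le_apply hψ P), sub_self]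
  have hconst : δ x = δ b :=
    eq_of_isPreconnected_of_eventually_eq isPreconnected_Iio hlocal hxy (hbx.trans hxy)
  simp only [δ] at hconst hzero
  omega

end Uniqueness

section PseudoDistance

variable {p q r : ℝ × EReal} {a b c : ℕ → ℝ × EReal} {s : ℝ≥0∞}

/-- The set `Δ̄*` of finite points on or above the diagonal together with the points at infinity
`(k, ⊤)`. -/
def extendedHalfPlane : Set (ℝ × EReal) :=
  {p | (p.1 : EReal) ≤ p.2}

/-- The point of the plane underlying a point of `ℝ × EReal` whose ordinate is not `⊤`. -/
def finitePart (p : ℝ × EReal) : ℝ × ℝ :=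
  (p.1, p.2.toReal)

/-- The distance to the diagonal in the sup norm, for points above the diagonal. -/
noncomputable def halfLifetime (p : ℝ × ℝ) : ℝ :=
  (p.2 - p.1) / 2

lemma lipschitzWith_halfLifetime : LipschitzWith 1 halfLifetime := by
  refine LipschitzWith.of_dist_le_mul fun p q => ?_
  have h₁ : |p.1 - q.1| ≤ dist p q := le_max_left _ _
  have h₂ : |p.2 - q.2| ≤ dist p q := le_max_right _ _
  rw [abs_le] at h₁ h₂
  rw [NNReal.coe_one, one_mul, Real.dist_eq, halfLifetime, halfLifetime, abs_le]
  constructor <;> linarith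

lemma halfLifetime_finitePart_nonneg (hp : p ∈ extendedHalfPlane) (h : p.2 ≠ ⊤) :
    0 ≤ halfLifetime (finitePart p) :=
  div_nonneg (sub_nonneg.2 (EReal.coe_le_coe_iff.1 (le_trans hp (EReal.le_coe_toReal h))))
    zero_le_two

lemma eDist_comm (p q : ℝ × EReal) : eDist p q = eDist q p := by
  simp only [eDist, abs_sub_comm, and_comm, or_comm, max_comm]

lemma eDist_of_eq_top (hp : p.2 = ⊤) (hq : q.2 = ⊤) : eDist p q = ENNReal.ofReal |p.1 - q.1| := by
  simp [eDist, hp, hq]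

lemma eDist_of_eq_top_of_ne_top (hp : p.2 = ⊤) (hq : q.2 ≠ ⊤) : eDist p q = ⊤ := by
  simp [eDist, hp, hq]

lemma eDist_of_ne_top_of_eq_top (hp : p.2 ≠ ⊤) (hq : q.2 = ⊤) : eDist p q = ⊤ := by
  simp [eDist, hp, hq]

lemma eDist_of_ne_top (hp : p.2 ≠ ⊤) (hq : q.2 ≠ ⊤) :
    eDist p q = ENNReal.ofReal (min (dist (finitePart p) (finitePart q))
      (max (halfLifetime (finitePart p)) (halfLifetime (finitePart q)))) := by
  rw [eDist, if_neg (fun h => hp h.1), if_neg (not_or_intro hp hq)]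
  rfl

lemma eDist_self (p : ℝ × EReal) : eDist p p = 0 := by
  by_cases hp : p.2 = ⊤
  · simp [eDist_of_eq_top hp hp]
  · simp [eDist_of_ne_top hp hp]

lemma eDist_diagonal (hp : p.2 = p.1) (hq : q.2 = q.1) : eDist p q = 0 := by
  rw [eDist_of_ne_top (hp ▸ EReal.coe_ne_top _) (hq ▸ EReal.coe_ne_top _)]
  simp [halfLifetime, finitePart, hp, hq]

lemma eDist_triangle (hp : p ∈ extendedHalfPlane) (hr : r ∈ extendedHalfPlane) (q : ℝ × EReal) :
    eDist p r ≤ eDist p q + eDist q r := by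
  by_cases hpt : p.2 = ⊤ <;> by_cases hqt : q.2 = ⊤ <;> by_cases hrt : r.2 = ⊤
  · rw [eDist_of_eq_top hpt hrt, eDist_of_eq_top hpt hqt, eDist_of_eq_top hqt hrt,
      ← ENNReal.ofReal_add (abs_nonneg _) (abs_nonneg _)]
    exact ENNReal.ofReal_le_ofReal (abs_sub_le _ _ _)
  · simp [eDist_of_eq_top_of_ne_top hqt hrt]
  · simp [eDist_of_eq_top_of_ne_top hpt hqt]
  · simp [eDist_of_eq_top_of_ne_top hpt hqt]
  · simp [eDist_of_ne_top_of_eq_top hpt hqt]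
  · simp [eDist_of_ne_top_of_eq_top hpt hqt]
  · simp [eDist_of_ne_top_of_eq_top hqt hrt]
  · have hp0 := halfLifetime_finitePart_nonneg hp hpt
    have hr0 := halfLifetime_finitePart_nonneg hr hrt
    rw [eDist_of_ne_top hpt hrt, eDist_of_ne_top hpt hqt, eDist_of_ne_top hqt hrt,
      ← ENNReal.ofReal_add (le_min dist_nonneg (le_max_of_le_left hp0))
        (le_min dist_nonneg (le_max_of_le_right hr0))]
    exact ENNReal.ofReal_le_ofReal (min_dist_max_le_add lipschitzWith_halfLifetime hp0 hr0 _)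

lemma dMatchSeq_eq_iInf_perm (a b : ℕ → ℝ × EReal) :
    dMatchSeq a b = ⨅ σ : Equiv.Perm ℕ, ⨆ i, eDist (a i) (b (σ i)) := by
  have hsurj : Function.Surjective
      fun σ : Equiv.Perm ℕ => (⟨σ, σ.bijective⟩ : {σ : ℕ → ℕ // Function.Bijective σ}) :=
    fun τ => ⟨Equiv.ofBijective τ.1 τ.2, rfl⟩
  exact (hsurj.iInf_comp _).symm

lemma dMatchSeq_le (σ : Equiv.Perm ℕ) (h : ∀ i, eDist (a i) (b (σ i)) ≤ s) :
    dMatchSeq a b ≤ s :=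
  (dMatchSeq_eq_iInf_perm a b).trans_le ((iInf_le _ σ).trans (iSup_le h))

lemma exists_perm_of_dMatchSeq_lt (h : dMatchSeq a b < s) :
    ∃ σ : Equiv.Perm ℕ, ∀ i, eDist (a i) (b (σ i)) < s := by
  rw [dMatchSeq_eq_iInf_perm, iInf_lt_iff] at h
  exact h.imp fun σ hσ i => (le_iSup (fun i => eDist (a i) (b (σ i))) i).trans_lt hσ

lemma dMatchSeq_comm (a b : ℕ → ℝ × EReal) : dMatchSeq a b = dMatchSeq b a := by
  rw [dMatchSeq_eq_iInf_perm, dMatchSeq_eq_iInf_perm]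
  refine (Equiv.inv (Equiv.Perm ℕ)).iInf_congr fun σ => (σ.iSup_congr fun i => ?_).symm
  simp [eDist_comm (b (σ i))]

lemma dMatchSeq_triangle (ha : ∀ i, a i ∈ extendedHalfPlane) (hc : ∀ i, c i ∈ extendedHalfPlane)
    (b : ℕ → ℝ × EReal) : dMatchSeq a c ≤ dMatchSeq a b + dMatchSeq b c := by
  rw [dMatchSeq_eq_iInf_perm a b, dMatchSeq_eq_iInf_perm b c, ENNReal.iInf_add]
  refine le_iInf fun σ => ?_
  rw [ENNReal.add_iInf]
  refine le_iInf fun τ => dMatchSeq_le (σ.trans τ) fun i => ?_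
  exact (eDist_triangle (ha i) (hc _) (b (σ i))).trans (add_le_add
    (le_iSup (fun i => eDist (a i) (b (σ i))) i) (le_iSup (fun i => eDist (b i) (c (τ i))) (σ i)))

end PseudoDistance

section RepresentativeSequences

variable {M N : Type*} [TopologicalSpace M] [TopologicalSpace N] {φ : M → ℝ} {ψ : N → ℝ}
  {a a' : ℕ → ℝ × EReal} {i : ℕ} {x : ℝ} {p : ℝ × ℝ}

/-- The points `(x, x)`, seen in `ℝ × EReal`. -/
def extendedDiagonal : Set (ℝ × EReal) :=
  {p | p.2 = p.1}

lemma mult_congr (h : ∀ x y, x < y → rsf φ x y = rsf ψ x y) (p : ℝ × ℝ) :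
    mult φ p = mult ψ p := by
  unfold mult
  congr 1
  ext z
  refine exists_congr fun ε => and_congr_right fun hε => and_congr_right fun hp => ?_
  rw [h _ _ hp, h _ _ (by linarith), h _ _ (by linarith), h _ _ (by linarith)]

lemma multInf_congr (h : ∀ x y, x < y → rsf φ x y = rsf ψ x y) (k : ℝ) :
    multInf φ k = multInf ψ k := by
  unfold multInf
  congr 1
  ext z
  refine exists_congr fun ε => and_congr_right fun hε => and_congr_right fun hk => ?_
  rw [h _ _ hk, h _ _ (by linarith)]

namespace IsRepSeq

lemma congr (h : ∀ x y, x < y → rsf φ x y = rsf ψ x y) (ha : IsRepSeq φ a) : IsRepSeq ψ a := by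
  simpa only [IsRepSeq, mult_congr h, multInf_congr h] using ha

lemma exists_eq_coe (ha : IsRepSeq φ a) (hi : i ≠ 0) :
    ∃ p : ℝ × ℝ, a i = (p.1, (p.2 : EReal)) ∧ (p ∈ properCornerpoints φ ∨ p.1 = p.2) := by
  rcases ha.2.1 i (Nat.pos_of_ne_zero hi) with ⟨x, y, hi, hxy, hmult⟩ | ⟨x, hi⟩
  · exact ⟨(x, y), hi, Or.inl ⟨hxy, hmult⟩⟩
  · exact ⟨(x, x), hi, Or.inr rfl⟩

lemma snd_eq_top_iff (ha : IsRepSeq φ a) : (a i).2 = ⊤ ↔ i = 0 := by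
  refine ⟨fun htop => ?_, ?_⟩
  · by_contra hi
    obtain ⟨p, hp, _⟩ := ha.exists_eq_coe hi
    rw [hp] at htop
    exact EReal.coe_ne_top _ htop
  · rintro rfl
    obtain ⟨k, hk, _⟩ := ha.1
    rw [hk]

lemma mem_extendedHalfPlane (ha : IsRepSeq φ a) (i : ℕ) : a i ∈ extendedHalfPlane := by
  rcases eq_or_ne i 0 with hi | hi
  · exact le_top.trans_eq (ha.snd_eq_top_iff.2 hi).symm
  · obtain ⟨p, hp, hmem⟩ := ha.exists_eq_coe hi
    rw [hp]
    exact EReal.coe_le_coe_iff.2 (hmem.elim (fun h => h.1.le) le_of_eq)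

lemma encard_fiber (ha : IsRepSeq φ a) (hp : p.1 < p.2) :
    {i | a i = (p.1, (p.2 : EReal))}.encard = (mult φ p).toNat := by
  rcases lt_or_ge 0 (mult φ p) with hpos | hle
  · have hcard := ha.2.2.1 p.1 p.2 hp hpos
    have hfin : {i | a i = (p.1, (p.2 : EReal))}.Finite :=
      finite_of_ncard_pos (hcard ▸ Int.lt_toNat.2 hpos)
    rw [← hfin.cast_ncard_eq, hcard]
  · rw [Int.toNat_of_nonpos hle, Nat.cast_zero, encard_eq_zero]
    refine eq_empty_of_forall_notMem fun i (hi : a i = _) => ?_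
    have hi0 : i ≠ 0 := by
      rw [Ne, ← ha.snd_eq_top_iff, hi]
      exact EReal.coe_ne_top _
    obtain ⟨q, hq, hmem⟩ := ha.exists_eq_coe hi0
    obtain rfl : q = p := congrArg finitePart (hq.symm.trans hi)
    exact hmem.elim (fun h => h.2.not_ge hle) hp.ne

lemma encard_diagonal (ha : IsRepSeq φ a) : {i | a i ∈ extendedDiagonal}.encard = ⊤ := by
  refine encard_eq_top (ha.2.2.2.mono ?_)
  rintro i ⟨x, hi⟩
  rw [mem_ofPred_eq, hi]
  rfl

lemma halfLifetime_finitePart_le [CompactSpace M] [LocallyConnectedSpace M] [Nonempty M]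
    (hφ : Continuous φ) (ha : IsRepSeq φ a) (hi : i ≠ 0) :
    halfLifetime (finitePart (a i)) ≤ ((⨆ Q, φ Q) - ⨅ Q, φ Q) / 2 := by
  obtain ⟨p, hp, hmem | hdiag⟩ := ha.exists_eq_coe hi
  · have hfst := iInf_le_fst_of_mem_properCornerpoints hφ hmem
    have hsnd := snd_le_iSup_of_mem_properCornerpoints hφ hmem
    rw [hp]
    exact div_le_div_of_nonneg_right (sub_le_sub hsnd hfst) zero_le_two
  · obtain ⟨Q⟩ := ‹Nonempty M›
    have hnonneg := sub_nonneg.2 ((iInf_le_apply hφ Q).trans (apply_le_iSup hφ Q))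
    rw [hp]
    simpa [halfLifetime, finitePart, hdiag] using div_nonneg hnonneg zero_le_two

lemma zero_eq [CompactSpace M] [ConnectedSpace M] [LocallyConnectedSpace M]
    (hφ : Continuous φ) (ha : IsRepSeq φ a) : a 0 = (⨅ Q, φ Q, ⊤) := by
  obtain ⟨k, hk, hpos⟩ := ha.1
  rw [hk, (multInf_pos_iff hφ).1 hpos]

lemma eq_top_iff [CompactSpace M] [ConnectedSpace M] [LocallyConnectedSpace M]
    (hφ : Continuous φ) (ha : IsRepSeq φ a) : a i = (x, ⊤) ↔ i = 0 ∧ x = ⨅ Q, φ Q := by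
  constructor
  · intro hi
    obtain rfl : i = 0 := ha.snd_eq_top_iff.1 (congrArg Prod.snd hi)
    exact ⟨rfl, congrArg Prod.fst (hi.symm.trans (ha.zero_eq hφ))⟩
  · rintro ⟨rfl, rfl⟩
    exact ha.zero_eq hφ

lemma encard_fiber_eq [CompactSpace M] [ConnectedSpace M] [LocallyConnectedSpace M]
    (hφ : Continuous φ) (ha : IsRepSeq φ a) (ha' : IsRepSeq φ a') {c : ℝ × EReal}
    (hc : c ∉ extendedDiagonal) : {i | a i = c}.encard = {i | a' i = c}.encard := by
  by_cases hmem : c ∈ extendedHalfPlane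
  · obtain ⟨x, y⟩ := c
    have hxy : (x : EReal) < y := lt_of_le_of_ne hmem (Ne.symm hc)
    induction y with
    | bot => exact absurd hxy not_lt_bot
    | coe y =>
      have hxy : x < y := EReal.coe_lt_coe_iff.1 hxy
      exact (ha.encard_fiber (p := (x, y)) hxy).trans (ha'.encard_fiber (p := (x, y)) hxy).symm
    | top => simp only [ha.eq_top_iff hφ, ha'.eq_top_iff hφ]
  · rw [encard_eq_zero.2, encard_eq_zero.2]
    · exact eq_empty_of_forall_notMem fun i hi => hmem (hi ▸ ha'.mem_extendedHalfPlane i)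
    · exact eq_empty_of_forall_notMem fun i hi => hmem (hi ▸ ha.mem_extendedHalfPlane i)

lemma dMatchSeq_eq_zero [CompactSpace M] [ConnectedSpace M] [LocallyConnectedSpace M]
    (hφ : Continuous φ) (ha : IsRepSeq φ a) (ha' : IsRepSeq φ a') : dMatchSeq a a' = 0 := by
  obtain ⟨σ, hσ⟩ := exists_equiv_eq_or_mem_of_encard_fiber_eq
    (ha.encard_diagonal.trans ha'.encard_diagonal.symm) fun c => ha.encard_fiber_eq hφ ha'
  refine nonpos_iff_eq_zero.1 (dMatchSeq_le σ fun i => ?_)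
  rcases hσ i with heq | ⟨hi, hσi⟩
  · rw [heq, eDist_self]
  · rw [eDist_diagonal hi hσi]

end IsRepSeq

lemma exists_isRepSeq [CompactSpace M] [ConnectedSpace M] [LocallyConnectedSpace M]
    (hφ : Continuous φ) : ∃ a, IsRepSeq φ a := by
  obtain ⟨s, hmem, hcard, hdiag⟩ := exists_seq_ncard_fiber_eq (countable_properCornerpoints hφ)
    (fun p => (mult φ p).toNat) (d := (0, 0)) fun h => h.1.false
  let a : ℕ → ℝ × EReal
    | 0 => (⨅ Q, φ Q, ⊤)
    | k + 1 => ((s k).1, ((s k).2 : EReal))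
  have hfiber (x y : ℝ) : {i | a i = (x, (y : EReal))} = Nat.succ '' {k | s k = (x, y)} := by
    ext (_ | k) <;> simp [a, Prod.ext_iff]
  refine ⟨a, ⟨_, rfl, (multInf_pos_iff hφ).2 rfl⟩, ?_, fun x y hxy hpos => ?_, ?_⟩
  · rintro (_ | k) hk
    · exact absurd hk (lt_irrefl 0)
    · rcases hmem k with h | h
      · exact Or.inl ⟨_, _, rfl, h⟩
      · exact Or.inr ⟨0, by simp [a, h]⟩
  · rw [hfiber, ncard_image_of_injective _ Nat.succ_injective]
    exact hcard (x, y) ⟨hxy, hpos⟩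
  · refine (hdiag.image Nat.succ_injective.injOn).mono ?_
    rw [← hfiber]
    exact fun i hi => ⟨0, hi⟩

end RepresentativeSequences

section MatchingDistance

variable {M N P : Type*} [TopologicalSpace M] [CompactSpace M] [ConnectedSpace M]
  [LocallyConnectedSpace M] [TopologicalSpace N] [CompactSpace N] [ConnectedSpace N]
  [LocallyConnectedSpace N] [TopologicalSpace P] [CompactSpace P] [ConnectedSpace P]
  [LocallyConnectedSpace P] {φ : M → ℝ} {ψ : N → ℝ} {χ : P → ℝ} {a a' b b' : ℕ → ℝ × EReal}

lemma dMatchSeq_le_of_isRepSeq (hφ : Continuous φ) (hψ : Continuous ψ) (ha : IsRepSeq φ a)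
    (ha' : IsRepSeq φ a') (hb : IsRepSeq ψ b) (hb' : IsRepSeq ψ b') :
    dMatchSeq a b ≤ dMatchSeq a' b' :=
  calc dMatchSeq a b
      ≤ dMatchSeq a a' + dMatchSeq a' b :=
        dMatchSeq_triangle ha.mem_extendedHalfPlane hb.mem_extendedHalfPlane a'
    _ ≤ dMatchSeq a a' + (dMatchSeq a' b' + dMatchSeq b' b) := by
        gcongr
        exact dMatchSeq_triangle ha'.mem_extendedHalfPlane hb.mem_extendedHalfPlane b'
    _ = dMatchSeq a' b' := by
        rw [ha.dMatchSeq_eq_zero hφ ha', hb'.dMatchSeq_eq_zero hψ hb, zero_add, add_zero]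

lemma dMatchSeq_eq_of_isRepSeq (hφ : Continuous φ) (hψ : Continuous ψ) (ha : IsRepSeq φ a)
    (ha' : IsRepSeq φ a') (hb : IsRepSeq ψ b) (hb' : IsRepSeq ψ b') :
    dMatchSeq a b = dMatchSeq a' b' :=
  (dMatchSeq_le_of_isRepSeq hφ hψ ha ha' hb hb').antisymm
    (dMatchSeq_le_of_isRepSeq hφ hψ ha' ha hb' hb)

lemma dMatch_eq_dMatchSeq (hφ : Continuous φ) (hψ : Continuous ψ) (ha : IsRepSeq φ a)
    (hb : IsRepSeq ψ b) : dMatch φ ψ = dMatchSeq a b := by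
  refine le_antisymm (sInf_le ⟨a, b, ha, hb, rfl⟩) (le_sInf ?_)
  rintro _ ⟨a', b', ha', hb', rfl⟩
  exact dMatchSeq_le_of_isRepSeq hφ hψ ha ha' hb hb'

lemma dMatch_ne_top (hφ : Continuous φ) (hψ : Continuous ψ) : dMatch φ ψ ≠ ⊤ := by
  obtain ⟨a, ha⟩ := exists_isRepSeq hφ
  obtain ⟨b, hb⟩ := exists_isRepSeq hψ
  rw [dMatch_eq_dMatchSeq hφ hψ ha hb]
  refine ne_top_of_le_ne_top ENNReal.ofReal_ne_top
    (dMatchSeq_le (Equiv.refl ℕ) (s := ENNReal.ofReal (max |(⨅ Q, φ Q) - ⨅ Q, ψ Q|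
      (max (((⨆ Q, φ Q) - ⨅ Q, φ Q) / 2) (((⨆ Q, ψ Q) - ⨅ Q, ψ Q) / 2)))) fun i => ?_)
  rcases eq_or_ne i 0 with rfl | hi
  · rw [Equiv.refl_apply, ha.zero_eq hφ, hb.zero_eq hψ, eDist_of_eq_top rfl rfl]
    exact ENNReal.ofReal_le_ofReal (le_max_left _ _)
  · rw [Equiv.refl_apply, eDist_of_ne_top (ha.snd_eq_top_iff.not.2 hi) (hb.snd_eq_top_iff.not.2 hi)]
    exact ENNReal.ofReal_le_ofReal <| (min_le_right _ _).trans <| le_max_of_le_right <|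
      max_le_max (ha.halfLifetime_finitePart_le hφ hi) (hb.halfLifetime_finitePart_le hψ hi)

lemma dMatch_comm {M N : Type*} [TopologicalSpace M] [TopologicalSpace N] (φ : M → ℝ)
    (ψ : N → ℝ) : dMatch φ ψ = dMatch ψ φ := by
  unfold dMatch
  congr 1
  ext s
  constructor <;> rintro ⟨a, b, ha, hb, rfl⟩ <;> exact ⟨b, a, hb, ha, dMatchSeq_comm _ _⟩

lemma dMatch_triangle (hφ : Continuous φ) (hψ : Continuous ψ) (hχ : Continuous χ) :
    dMatch φ χ ≤ dMatch φ ψ + dMatch ψ χ := by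
  obtain ⟨a, ha⟩ := exists_isRepSeq hφ
  obtain ⟨b, hb⟩ := exists_isRepSeq hψ
  obtain ⟨c, hc⟩ := exists_isRepSeq hχ
  rw [dMatch_eq_dMatchSeq hφ hχ ha hc, dMatch_eq_dMatchSeq hφ hψ ha hb,
    dMatch_eq_dMatchSeq hψ hχ hb hc]
  exact dMatchSeq_triangle ha.mem_extendedHalfPlane hc.mem_extendedHalfPlane b

lemma ofReal_abs_iInf_sub_iInf_le_dMatchSeq (hφ : Continuous φ) (hψ : Continuous ψ)
    (ha : IsRepSeq φ a) (hb : IsRepSeq ψ b) :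
    ENNReal.ofReal |(⨅ Q, φ Q) - ⨅ Q, ψ Q| ≤ dMatchSeq a b := by
  rw [dMatchSeq_eq_iInf_perm]
  refine le_iInf fun σ => le_trans ?_ (le_iSup _ 0)
  by_cases hσ : σ 0 = 0
  · rw [hσ, ha.zero_eq hφ, hb.zero_eq hψ, eDist_of_eq_top rfl rfl]
  · rw [eDist_of_eq_top_of_ne_top (ha.snd_eq_top_iff.2 rfl) (hb.snd_eq_top_iff.not.2 hσ)]
    exact le_top

end MatchingDistance

section Separation

variable {M N : Type*} [TopologicalSpace M] [TopologicalSpace N] {φ : M → ℝ} {ψ : N → ℝ}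
  {a b : ℕ → ℝ × EReal} {p : ℝ × ℝ}

lemma IsRepSeq.eventually_eq_of_eDist_lt [CompactSpace N] [LocallyConnectedSpace N]
    (hψ : Continuous ψ) (hb : IsRepSeq ψ b) (hp : p.1 < p.2) :
    ∀ᶠ ε in 𝓝[>] (0 : ℝ), ∀ j, eDist (p.1, (p.2 : EReal)) (b j) < ENNReal.ofReal ε →
      b j = (p.1, (p.2 : EReal)) := by
  obtain ⟨δ, hδ, hball⟩ := Metric.eventually_nhds_iff.1
    (eventually_eq_of_mem_properCornerpoints_or_diagonal hψ hp)
  have hlife : 0 < halfLifetime p := half_pos (sub_pos.2 hp)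
  filter_upwards [Ioo_mem_nhdsGT (lt_min hδ hlife)] with ε hε j hj
  have hptop : ((p.1, (p.2 : EReal)) : ℝ × EReal).2 ≠ ⊤ := EReal.coe_ne_top _
  have hbtop : (b j).2 ≠ ⊤ := fun htop =>
    not_top_lt (eDist_of_ne_top_of_eq_top hptop htop ▸ hj)
  obtain ⟨q, hq, hmem⟩ := hb.exists_eq_coe (hb.snd_eq_top_iff.not.1 hbtop)
  rw [eDist_of_ne_top hptop hbtop, hq, ENNReal.ofReal_lt_ofReal_iff hε.1] at hj
  have hdist : dist p q < ε := (min_lt_iff.1 hj).resolve_right fun h =>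
    (h.trans (hε.2.trans_le (min_le_right _ _))).not_ge (le_max_left _ _)
  have hqp : q = p := hball (dist_comm p q ▸ hdist.trans (hε.2.trans_le (min_le_left _ _))) hmem
  rw [hq, hqp]

lemma mult_le_of_dMatchSeq_eq_zero [CompactSpace N] [LocallyConnectedSpace N]
    (hψ : Continuous ψ) (ha : IsRepSeq φ a) (hb : IsRepSeq ψ b) (h : dMatchSeq a b = 0)
    (hp : p.1 < p.2) : mult φ p ≤ mult ψ p := by
  obtain ⟨ε, hclose, hε⟩ := ((hb.eventually_eq_of_eDist_lt hψ hp).and self_mem_nhdsWithin).exists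
  obtain ⟨σ, hσ⟩ := exists_perm_of_dMatchSeq_lt (h.trans_lt (ENNReal.ofReal_pos.2 hε))
  have hmaps : MapsTo σ {i | a i = (p.1, (p.2 : EReal))} {j | b j = (p.1, (p.2 : EReal))} :=
    fun i (hi : a i = _) => hclose (σ i) (hi ▸ hσ i)
  have hcard := encard_le_encard_of_injOn hmaps σ.injective.injOn
  rw [ha.encard_fiber hp, hb.encard_fiber hp, Nat.cast_le] at hcard
  have := mult_nonneg hψ hp
  omega

variable [CompactSpace M] [ConnectedSpace M] [LocallyConnectedSpace M] [NormalSpace M]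
  [CompactSpace N] [ConnectedSpace N] [LocallyConnectedSpace N] [NormalSpace N]

lemma rsf_eq_of_dMatchSeq_eq_zero (hφ : Continuous φ) (hψ : Continuous ψ) (ha : IsRepSeq φ a)
    (hb : IsRepSeq ψ b) (h : dMatchSeq a b = 0) {x y : ℝ} (hxy : x < y) :
    rsf φ x y = rsf ψ x y := by
  have hinf : ⨅ Q, φ Q = ⨅ Q, ψ Q := by
    have hle := h ▸ ofReal_abs_iInf_sub_iInf_le_dMatchSeq hφ hψ ha hb
    rwa [nonpos_iff_eq_zero, ENNReal.ofReal_eq_zero, abs_nonpos_iff, sub_eq_zero] at hle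
  refine rsf_eq_of_mult_eq hφ hψ (fun p hp => ?_) (eventually_atTop_rsf_eq hφ hψ hinf) hxy
  exact (mult_le_of_dMatchSeq_eq_zero hψ ha hb h hp).antisymm
    (mult_le_of_dMatchSeq_eq_zero hφ hb ha ((dMatchSeq_comm b a).trans h) hp)

lemma dMatch_eq_zero_iff (hφ : Continuous φ) (hψ : Continuous ψ) :
    dMatch φ ψ = 0 ↔ ∀ x y : ℝ, x < y → rsf φ x y = rsf ψ x y := by
  obtain ⟨a, ha⟩ := exists_isRepSeq hφ
  constructor
  · obtain ⟨b, hb⟩ := exists_isRepSeq hψ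
    rw [dMatch_eq_dMatchSeq hφ hψ ha hb]
    exact fun h x y => rsf_eq_of_dMatchSeq_eq_zero hφ hψ ha hb h
  · intro h
    rw [dMatch_eq_dMatchSeq hφ hψ ha (ha.congr h), ha.dMatchSeq_eq_zero hφ ha]

end Separation

theorem matching_distance_well_defined_and_metric_general
    {M N P : Type*} [TopologicalSpace M] [CompactSpace M] [ConnectedSpace M]
    [LocallyConnectedSpace M] [NormalSpace M] [TopologicalSpace N] [CompactSpace N]
    [ConnectedSpace N] [LocallyConnectedSpace N] [NormalSpace N] [TopologicalSpace P]
    [CompactSpace P] [ConnectedSpace P] [LocallyConnectedSpace P]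
    {φ : M → ℝ} {ψ : N → ℝ} {χ : P → ℝ}
    (hφ : Continuous φ) (hψ : Continuous ψ) (hχ : Continuous χ) :
    (∀ a a' b b' : ℕ → ℝ × EReal, IsRepSeq φ a → IsRepSeq φ a' →
      IsRepSeq ψ b → IsRepSeq ψ b' → dMatchSeq a b = dMatchSeq a' b') ∧
    dMatch φ ψ ≠ ⊤ ∧
    dMatch φ ψ = dMatch ψ φ ∧
    dMatch φ χ ≤ dMatch φ ψ + dMatch ψ χ ∧
    (dMatch φ ψ = 0 ↔ ∀ x y : ℝ, x < y → rsf φ x y = rsf ψ x y) :=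
  ⟨fun _ _ _ _ ha ha' hb hb' => dMatchSeq_eq_of_isRepSeq hφ hψ ha ha' hb hb',
    dMatch_ne_top hφ hψ, dMatch_comm φ ψ, dMatch_triangle hφ hψ hχ, dMatch_eq_zero_iff hφ hψ⟩

theorem matching_distance_well_defined_and_metric
    {M N P : Type*} [TopologicalSpace M] [CompactSpace M] [ConnectedSpace M] [LocallyConnectedSpace M] [T2Space M] [TopologicalSpace N] [CompactSpace N] [ConnectedSpace N] [LocallyConnectedSpace N] [T2Space N] [TopologicalSpace P] [CompactSpace P] [ConnectedSpace P] [LocallyConnectedSpace P] [T2Space P]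
    {φ : M → ℝ} {ψ : N → ℝ} {χ : P → ℝ}
    (hφ : Continuous φ) (hψ : Continuous ψ) (hχ : Continuous χ) :
    (∀ a a' b b' : ℕ → ℝ × EReal, IsRepSeq φ a → IsRepSeq φ a' →
      IsRepSeq ψ b → IsRepSeq ψ b' → dMatchSeq a b = dMatchSeq a' b') ∧
    dMatch φ ψ ≠ ⊤ ∧
    dMatch φ ψ = dMatch ψ φ ∧
    dMatch φ χ ≤ dMatch φ ψ + dMatch ψ χ ∧
    (dMatch φ ψ = 0 ↔ ∀ x y : ℝ, x < y → rsf φ x y = rsf ψ x y) :=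
  matching_distance_well_defined_and_metric_general hφ hψ hχ
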